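/- Let a be a ribbon with n ≥ 4 nodes, all of which are positive. Then every extension of a has at least δ(a) critical points in the open unit disk; that is, γ(a) ≥ δ(a). -/

import Mathlib

open scoped RealInnerProductSpace

noncomputable section

abbrev E2 : Type := EuclideanSpace ℝ (Fin 2)

/-- The point (cos t, sin t) on the unit circle in ℝ². -/
def sphPt (t : ℝ) : E2 := (EuclideanSpace.equiv (Fin 2) ℝ).symm ![Real.cos t, Real.sin t]

/-- A ribbon with `n` nodes, encoded via the angle parametrization `g = φ ∘ (cos, sin)`
of a C^∞ function `φ : S¹ → ℝ` whose critical points on the circle are exactly the `n`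
nondegenerate local extrema (nodes) at angles `θ 0 < θ 1 < ⋯ < θ (n-1)` in `[0, 2π)`,
with pairwise distinct critical values, together with a marking `ν` of the nodes by `±1`. -/
structure Ribbon (n : ℕ) : Type where
  g : ℝ → ℝ
  θ : Fin n → ℝ
  ν : Fin n → ℤ
  n_even : Even n
  n_pos : 0 < n
  smooth_g : ContDiff ℝ (⊤ : ℕ∞) g
  periodic_g : Function.Periodic g (2 * Real.pi)
  theta_mem : ∀ i, θ i ∈ Set.Ico (0 : ℝ) (2 * Real.pi)
  theta_mono : StrictMono θ
  node_crit : ∀ i, deriv g (θ i) = 0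
  node_nondeg : ∀ i, deriv (deriv g) (θ i) ≠ 0
  crit_only : ∀ t ∈ Set.Ico (0 : ℝ) (2 * Real.pi), deriv g t = 0 → ∃ i, t = θ i
  values_distinct : ∀ i j, g (θ i) = g (θ j) → i = j
  nu_sign : ∀ i, ν i = 1 ∨ ν i = -1

/-- The signature σ = s₊ − s₋ of a ribbon. -/
def Ribbon.sigma {n : ℕ} (a : Ribbon n) : ℤ := ∑ i, a.ν i

/-- Critical points of `f` in the open unit disk. -/
def critPts (f : E2 → ℝ) : Set E2 :=
  {x | x ∈ Metric.ball (0 : E2) 1 ∧ fderiv ℝ f x = 0}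

/-- `f : ℝ² → ℝ` is an extension of the ribbon `a`: it is C^∞, agrees with `φ` on the unit
circle, has nowhere-vanishing gradient on the circle, and at each node the radial derivative
`⟪∇f(p), p⟫` has sign `ν p` if `p` is a local maximum of `φ` (second derivative of `g`
negative there) and sign `−ν p` if `p` is a local minimum of `φ`. -/
def IsExtension {n : ℕ} (a : Ribbon n) (f : E2 → ℝ) : Prop :=
  ContDiff ℝ (⊤ : ℕ∞) f ∧
  (∀ t : ℝ, f (sphPt t) = a.g t) ∧
  (∀ x ∈ Metric.sphere (0 : E2) 1, fderiv ℝ f x ≠ 0) ∧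
  (∀ i : Fin n,
    (deriv (deriv a.g) (a.θ i) < 0 →
      0 < (a.ν i : ℝ) * ⟪gradient f (sphPt (a.θ i)), sphPt (a.θ i)⟫) ∧
    (0 < deriv (deriv a.g) (a.θ i) →
      (a.ν i : ℝ) * ⟪gradient f (sphPt (a.θ i)), sphPt (a.θ i)⟫ < 0))

/-- The ribbon invariant γ: the infimum, over all extensions `f` of `a`, of the number of
critical points of `f` in the open unit disk (a value in `ℕ∞`). -/
def gammaR {n : ℕ} (a : Ribbon n) : ℕ∞ :=
  sInf {k : ℕ∞ | ∃ f : E2 → ℝ, IsExtension a f ∧ (critPts f).encard = k}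

/-- The cyclically next node index. -/
def Ribbon.next {n : ℕ} (a : Ribbon n) (i : Fin n) : Fin n :=
  ⟨((i : ℕ) + 1) % n, Nat.mod_lt _ a.n_pos⟩

/-- The cluster number δ(a): the least cardinality of a finite subset of ℝ meeting, for
every `i`, the closed interval with endpoints `l i = φ (p i)` and `l (i+1)` (cyclically). -/
def clusterNumber {n : ℕ} (a : Ribbon n) : ℕ :=
  sInf {k : ℕ | ∃ A : Finset ℝ, A.card = k ∧
    ∀ i : Fin n, ∃ x ∈ A, x ∈ Set.uIcc (a.g (a.θ i)) (a.g (a.θ (a.next i)))}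

/-!
Since all nodes are positive, an extension `f` has negative radial derivative at every local minimum
of `f` on the circle, which is therefore a strict local minimum of `f` on the closed disk, and
positive radial derivative at every local maximum on the circle, from which `f` descends into the
disk. From any other point of the circle, `f` descends along the circle. The arc through a maximal
node joins the two neighbouring minimal nodes, so the mountain pass principle on the closed disk
yields a point at an intermediate level from which `f` has no descent and which is not a strict
local minimum. It cannot lie on the circle, so it is a critical point in the open disk. Every edge
of the ribbon ends at a maximal node, hence the critical values meet all the intervals in the
definition of the cluster number.

For the mountain pass principle, let `U` be the path component of the first minimum in `{F < d}`,
where `d` is the pass level. No point of `closure U` at level `d` is a strict local minimum. If `F`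
had a descent from each of these points, then `closure U` would be relatively open in `{F ≤ d}`,
hence surrounded by a ridge of height greater than some `c > d`. Paths below `c` cannot cross the
ridge, so the second minimum would lie in `U`, and a path in `U` between the two minima would stay
below a level smaller than `d`.
-/

section PassLevel

open Set Filter Topology

/-- `x` is a strict local minimum of `f` relative to the set `s`. -/
def IsStrictLocalMinOn {X : Type*} [TopologicalSpace X] (f : X → ℝ) (s : Set X) (x : X) : Prop :=
  ∀ᶠ y in 𝓝[s] x, y ≠ x → f x < f y

/-- `x` is a regular point of `F` in the topological sense: some deformation of the whole space
strictly decreases `F` at all points near `x`. -/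
def HasLocalDescent {X : Type*} [TopologicalSpace X] (F : X → ℝ) (x : X) : Prop :=
  ∃ H : unitInterval × X → X, Continuous H ∧ (∀ y, H (0, y) = y) ∧
    ∀ᶠ y in 𝓝 x, ∀ t, 0 < t → F (H (t, y)) < F y

/-- The mountain pass level: the infimum of the heights that a path from `p` to `q` can stay below.
It is meaningful only if some path from `p` to `q` has bounded height. -/
def passLevel {X : Type*} [TopologicalSpace X] (F : X → ℝ) (p q : X) : ℝ :=
  sInf {c | JoinedIn (F ⁻¹' Iic c) p q}

variable {X : Type*} [TopologicalSpace X] {F : X → ℝ} {c d m : ℝ} {p q x : X}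

lemma mem_lowerBounds_joinedIn_sublevel (F : X → ℝ) (p q : X) :
    max (F p) (F q) ∈ lowerBounds {c | JoinedIn (F ⁻¹' Iic c) p q} :=
  fun _ h => max_le h.source_mem h.target_mem

lemma passLevel_le (h : JoinedIn (F ⁻¹' Iic c) p q) : passLevel F p q ≤ c :=
  csInf_le ⟨_, mem_lowerBounds_joinedIn_sublevel F p q⟩ h

lemma max_le_passLevel (h : JoinedIn (F ⁻¹' Iic m) p q) : max (F p) (F q) ≤ passLevel F p q :=
  le_csInf ⟨m, h⟩ (mem_lowerBounds_joinedIn_sublevel F p q)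

lemma joinedIn_of_passLevel_lt (h : JoinedIn (F ⁻¹' Iic m) p q) (hc : passLevel F p q < c) :
    JoinedIn (F ⁻¹' Iic c) p q := by
  obtain ⟨c', hc', hlt⟩ := exists_lt_of_csInf_lt ⟨m, h⟩ hc
  exact hc'.mono (preimage_mono (Iic_subset_Iic.2 hlt.le))

lemma not_joinedIn_lt_passLevel (hF : Continuous F) :
    ¬ JoinedIn (F ⁻¹' Iio (passLevel F p q)) p q := by
  rintro ⟨γ, hγ⟩
  obtain ⟨t, -, ht⟩ := isCompact_univ.exists_isMaxOn univ_nonempty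
    (hF.comp γ.continuous).continuousOn
  exact (passLevel_le ⟨γ, fun r => ht (mem_univ r)⟩).not_gt (hγ t)

lemma joinedIn_of_forall_Ici {U : Set X} {h : unitInterval → X} (hh : Continuous h)
    {s : unitInterval} (hU : ∀ r, s ≤ r → h r ∈ U) : JoinedIn U (h s) (h 1) :=
  ⟨⟨⟨fun r => h (max s r), by fun_prop⟩, congrArg h (max_eq_left s.2.1),
    congrArg h (max_eq_right s.2.2)⟩, fun _ => hU _ (le_max_left _ _)⟩

lemma isStrictLocalMinOn_domRestrict_iff {D : Set X} {x : D} :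
    IsStrictLocalMinOn (D.domRestrict F) univ x ↔ IsStrictLocalMinOn F D x := by
  simp only [IsStrictLocalMinOn, nhdsWithin_univ, domRestrict_apply, ne_eq, Subtype.ext_iff]
  exact eventually_nhds_subtype_iff D x fun y => y ≠ x → F x < F y

lemma IsStrictLocalMinOn.notMem_closure_sublevel (hx : IsStrictLocalMinOn F univ x) :
    x ∉ closure (F ⁻¹' Iio (F x)) := by
  rw [IsStrictLocalMinOn, nhdsWithin_univ] at hx
  intro hcl
  obtain ⟨y, hy, hxy⟩ := ((mem_closure_iff_frequently.1 hcl).and_eventually hx).exists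
  exact (hxy fun h => hy.ne (congrArg F h)).not_gt hy

/-- A closed set that is relatively open in a sublevel set is surrounded by a ridge of strictly
larger height, which no path of slightly larger height can cross. -/
lemma mem_of_isolated_in_sublevel [CompactSpace X] [T2Space X] (hF : Continuous F) {A : Set X}
    (hA : IsClosed A) (hpA : p ∈ A) (hiso : ∀ y ∈ A, ∀ᶠ z in 𝓝 y, F z ≤ d → z ∈ A)
    (hjoin : ∀ c, d < c → JoinedIn (F ⁻¹' Iic c) p q) (hq : F q ≤ d) : q ∈ A := by
  obtain ⟨O, hO, hAO, hOA⟩ : ∃ O, IsOpen O ∧ A ⊆ O ∧ closure O ⊆ {z | F z ≤ d → z ∈ A} := by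
    obtain ⟨O, hO, hAO, hOA⟩ := normal_exists_closure_subset hA isOpen_interior
      (fun y hy => mem_interior_iff_mem_nhds.2 (hiso y hy))
    exact ⟨O, hO, hAO, hOA.trans interior_subset⟩
  obtain ⟨c, hdc, hridge⟩ : ∃ c, d < c ∧ ∀ z ∈ closure O \ O, c < F z := by
    rcases (closure O \ O).eq_empty_or_nonempty with hempty | hne
    · exact ⟨d + 1, by linarith, by simp [hempty]⟩
    · obtain ⟨z, hz, hmin⟩ := (isClosed_closure.sdiff hO).isCompact.exists_isMinOn hne
        hF.continuousOn
      have hdz : d < F z := lt_of_not_ge fun h => hz.2 (hAO (hOA hz.1 h))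
      obtain ⟨c, hdc, hcz⟩ := exists_between hdz
      exact ⟨c, hdc, fun w hw => hcz.trans_le (hmin hw)⟩
  obtain ⟨γ, hγ⟩ := hjoin c hdc
  have hrange : range γ ⊆ O :=
    (isPreconnected_range γ.continuous).subset_left_of_subset_union hO
      isClosed_closure.isOpen_compl
      (disjoint_compl_right_iff_subset.2 subset_closure)
      (by
        rintro _ ⟨t, rfl⟩
        by_contra! h
        rw [mem_union, not_or, notMem_compl_iff] at h
        exact (hridge _ ⟨h.2, h.1⟩).not_ge (hγ t))
      ⟨p, ⟨0, γ.source⟩, hAO hpA⟩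
  exact hOA (subset_closure (hrange ⟨1, γ.target⟩)) hq

lemma IsStrictLocalMinOn.lt_passLevel [CompactSpace X] [T2Space X] (hF : Continuous F)
    (hp : IsStrictLocalMinOn F univ p) (hpq : p ≠ q) (hjoin : JoinedIn (F ⁻¹' Iic m) p q) :
    F p < passLevel F p q := by
  obtain ⟨hpd, hqd⟩ := max_le_iff.1 (max_le_passLevel hjoin)
  refine hpd.lt_of_ne fun hpd_eq => hpq.symm ?_
  have : q ∈ ({p} : Set X) := by
    refine mem_of_isolated_in_sublevel hF isClosed_singleton (mem_singleton p) ?_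
      (fun c => joinedIn_of_passLevel_lt hjoin) hqd
    rintro _ rfl
    rw [IsStrictLocalMinOn, nhdsWithin_univ] at hp
    filter_upwards [hp] with z hz hzd
    by_contra hzp
    exact (hz hzp).not_ge (hzd.trans hpd_eq.ge)
  exact this

section Closure

variable [LocallyPathConnectedSpace X]

lemma mem_pathComponentIn_of_mem_closure {U : Set X} (hU : IsOpen U) (hx : x ∈ U)
    (hcl : x ∈ closure (pathComponentIn U p)) : x ∈ pathComponentIn U p := by
  obtain ⟨z, hz, hpz⟩ := mem_closure_iff_nhds.1 hcl _
    (pathComponentIn_mem_nhds (hU.mem_nhds hx))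
  exact hpz.trans hz.symm

lemma HasLocalDescent.eventually_mem_closure (hF : Continuous F) (hx : HasLocalDescent F x)
    (hcl : x ∈ closure (pathComponentIn (F ⁻¹' Iio (F x)) p)) :
    ∀ᶠ y in 𝓝 x, F y ≤ F x → y ∈ closure (pathComponentIn (F ⁻¹' Iio (F x)) p) := by
  obtain ⟨H, hH, hH0, hdesc⟩ := hx
  set U := F ⁻¹' Iio (F x)
  have hflow : ∀ y, Continuous fun t => H (t, y) := fun y => hH.comp (by fun_prop)
  have hend : ∀ᶠ y in 𝓝 x, H (1, y) ∈ pathComponentIn U (H (1, x)) := by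
    have hopen : IsOpen (pathComponentIn U (H (1, x))) :=
      (isOpen_Iio.preimage hF).pathComponentIn _
    have hcont : Continuous fun y => H (1, y) := hH.comp (by fun_prop)
    exact hcont.continuousAt.eventually_mem
      (hopen.mem_nhds (mem_pathComponentIn_self (hdesc.self_of_nhds 1 zero_lt_one)))
  have hbase : JoinedIn U p (H (1, x)) := by
    obtain ⟨z, hz, hzend, hzdesc⟩ :=
      ((mem_closure_iff_frequently.1 hcl).and_eventually (hend.and hdesc)).exists
    have hzU : F z < F x := hz.target_mem
    have hz1 : JoinedIn U (H (0, z)) (H (1, z)) := by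
      refine joinedIn_of_forall_Ici (hflow z) fun r _ => ?_
      rcases eq_or_ne r 0 with rfl | hr
      · rwa [hH0]
      · exact (hzdesc r (unitInterval.pos_iff_ne_zero.2 hr)).trans hzU
    rw [hH0] at hz1
    exact hz.trans (hz1.trans hzend.symm)
  filter_upwards [hend, hdesc] with y hyend hydesc hyx
  have hpos : ∀ s : unitInterval, 0 < s → H (s, y) ∈ pathComponentIn U p := by
    intro s hs
    have hs1 : JoinedIn U (H (s, y)) (H (1, y)) := joinedIn_of_forall_Ici (hflow y)
      fun r hr => (hydesc r (hs.trans_le hr)).trans_le hyx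
    exact hbase.trans (hyend.trans hs1.symm)
  have : (𝓝[>] (0 : unitInterval)).NeBot := nhdsGT_neBot_of_exists_gt ⟨1, zero_lt_one⟩
  refine mem_closure_of_tendsto (b := 𝓝[>] (0 : unitInterval)) (f := fun t => H (t, y)) ?_ ?_
  · simpa only [hH0] using ((hflow y).tendsto 0).mono_left nhdsWithin_le_nhds
  · filter_upwards [self_mem_nhdsWithin] with s hs using hpos s hs

end Closure

theorem exists_mountain_pass_point [CompactSpace X] [T2Space X] [LocallyPathConnectedSpace X]
    (hF : Continuous F) (hpq : p ≠ q) (hp : IsStrictLocalMinOn F univ p)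
    (hq : IsStrictLocalMinOn F univ q) (hjoin : JoinedIn (F ⁻¹' Iic m) p q) :
    ∃ x, max (F p) (F q) ≤ F x ∧ F x ≤ m ∧ ¬ IsStrictLocalMinOn F univ x ∧
      ¬ HasLocalDescent F x := by
  set d := passLevel F p q
  have hqd : F q ≤ d := (le_max_right _ _).trans (max_le_passLevel hjoin)
  have hjoin' : ∀ c, d < c → JoinedIn (F ⁻¹' Iic c) p q := fun c => joinedIn_of_passLevel_lt hjoin
  suffices ∃ x, F x = d ∧ ¬ IsStrictLocalMinOn F univ x ∧ ¬ HasLocalDescent F x by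
    obtain ⟨x, hx, hmin, hdesc⟩ := this
    exact ⟨x, (max_le_passLevel hjoin).trans hx.ge, hx.le.trans (passLevel_le hjoin), hmin, hdesc⟩
  by_contra! hreg
  have hpd : F p < d := hp.lt_passLevel hF hpq hjoin
  set U := pathComponentIn (F ⁻¹' Iio d) p
  have hnotmin : ∀ x ∈ closure U, F x = d → ¬ IsStrictLocalMinOn F univ x := fun x hx hxd hmin =>
    hmin.notMem_closure_sublevel (closure_mono (hxd ▸ pathComponentIn_subset) hx)
  have hqU : q ∈ closure U := by
    refine mem_of_isolated_in_sublevel hF isClosed_closure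
      (subset_closure (mem_pathComponentIn_self hpd)) (fun x hx => ?_) hjoin' hqd
    have hxd : F x ≤ d :=
      closure_lt_subset_le hF continuous_const (closure_mono pathComponentIn_subset hx)
    rcases hxd.lt_or_eq with hlt | heq
    · have hxU : x ∈ U := mem_pathComponentIn_of_mem_closure (isOpen_Iio.preimage hF) hlt hx
      filter_upwards [((isOpen_Iio.preimage hF).pathComponentIn p).mem_nhds hxU] with z hz _
      exact subset_closure hz
    · have hclose := (hreg x heq (hnotmin x hx heq)).eventually_mem_closure (p := p) hF
      rw [heq] at hclose
      exact hclose hx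
  have hqd' : F q < d := hqd.lt_of_ne fun h => hnotmin q hqU h hq
  exact not_joinedIn_lt_passLevel hF
    (mem_pathComponentIn_of_mem_closure (isOpen_Iio.preimage hF) hqd' hqU)

end PassLevel

section Convex

open Set Filter Topology Metric

variable {E : Type*} [NormedAddCommGroup E] [NormedSpace ℝ E] {f : E → ℝ} {f' : E →L[ℝ] ℝ}
  {D : Set E} {m : ℝ} {p q v x : E}

/-- `x` satisfies the first-order necessary condition for a minimum of `f` over the convex set
`D`: no direction pointing from `x` into `D` has negative slope. -/
def IsStationaryOn (f : E → ℝ) (D : Set E) (x : E) : Prop :=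
  ∀ w ∈ D, 0 ≤ fderiv ℝ f x (w - x)

lemma eventually_add_smul_lt_of_hasStrictFDerivAt (hf : HasStrictFDerivAt f f' x) (hv : f' v < 0) :
    ∀ᶠ z : E × E × ℝ in 𝓝 x ×ˢ 𝓝 v ×ˢ 𝓝[>] 0, f (z.1 + z.2.2 • z.2.1) < f z.1 := by
  set l : Filter (E × E × ℝ) := 𝓝 x ×ˢ 𝓝 v ×ˢ 𝓝[>] 0
  have hbase : Tendsto (fun z : E × E × ℝ => z.1) l (𝓝 x) := tendsto_fst
  have hdir : Tendsto (fun z : E × E × ℝ => z.2.1) l (𝓝 v) := tendsto_fst.comp tendsto_snd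
  have htime : Tendsto (fun z : E × E × ℝ => z.2.2) l (𝓝[>] 0) := tendsto_snd.comp tendsto_snd
  have hshift : Tendsto (fun z : E × E × ℝ => z.1 + z.2.2 • z.2.1) l (𝓝 x) := by
    simpa using hbase.add ((tendsto_nhds_of_tendsto_nhdsWithin htime).smul hdir)
  have hlittle : (fun z : E × E × ℝ => f (z.1 + z.2.2 • z.2.1) - f z.1 - z.2.2 * f' z.2.1) =o[l]
      fun z => z.2.2 := by
    have hbound : (fun z : E × E × ℝ => z.2.2 • z.2.1) =O[l] fun z => z.2.2 := by
      simpa using (Asymptotics.isBigO_refl (fun z : E × E × ℝ => z.2.2) l).smul (hdir.isBigO_one ℝ)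
    have hdiff := (hf.isLittleO.comp_tendsto (hshift.prodMk_nhds hbase)).trans_isBigO
      (by simpa [Function.comp_def] using hbound)
    simpa only [Function.comp_def, add_sub_cancel_left, map_smul, smul_eq_mul] using hdiff
  have hslope : Tendsto (fun z : E × E × ℝ =>
      (f (z.1 + z.2.2 • z.2.1) - f z.1 - z.2.2 * f' z.2.1) / z.2.2 + f' z.2.1) l (𝓝 (f' v)) := by
    simpa using hlittle.tendsto_div_nhds_zero.add ((f'.continuous.tendsto v).comp hdir)
  filter_upwards [hslope.eventually_lt_const hv, htime.eventually self_mem_nhdsWithin]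
    with z hz (ht : 0 < z.2.2)
  have : (f (z.1 + z.2.2 • z.2.1) - f z.1) / z.2.2 < 0 := by
    rwa [sub_div _ (_ * _), mul_div_cancel_left₀ _ ht.ne', sub_add_cancel] at hz
  exact sub_neg.1 (neg_of_div_neg_left this ht.le)

/-- The deformation moves every point of `D` a fixed fraction of the way towards `w`. -/
lemma hasLocalDescent_domRestrict (hD : Convex ℝ D) {x : D} {w : E} (hw : w ∈ D)
    (hf : HasStrictFDerivAt f f' x) (hneg : f' (w - x) < 0) :
    HasLocalDescent (D.domRestrict f) x := by
  have hdir : Tendsto (fun z : D × ℝ => ((z.1 : E), w - z.1, z.2)) (𝓝 x ×ˢ 𝓝[>] 0)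
      (𝓝 (x : E) ×ˢ 𝓝 (w - x) ×ˢ 𝓝[>] 0) := by
    have hval : Tendsto (fun z : D × ℝ => (z.1 : E)) (𝓝 x ×ˢ 𝓝[>] 0) (𝓝 (x : E)) :=
      (continuous_subtype_val.tendsto x).comp tendsto_fst
    exact hval.prodMk ((hval.const_sub w).prodMk tendsto_snd)
  obtain ⟨P, hP, Q, hQ, hPQ⟩ := eventually_prod_iff.1
    (hdir.eventually (eventually_add_smul_lt_of_hasStrictFDerivAt hf hneg))
  obtain ⟨s, hs, hsQ⟩ := mem_nhdsGT_iff_exists_Ioc_subset.1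
    (inter_mem hQ (Ioc_mem_nhdsGT zero_lt_one))
  have hs1 : s ≤ 1 := (hsQ (right_mem_Ioc.2 hs)).2.2
  have hmem : ∀ z : unitInterval × D, (z.2 : E) + ((z.1 : ℝ) * s) • (w - z.2) ∈ D := fun z =>
    hD.add_smul_sub_mem z.2.2 hw
      ⟨mul_nonneg z.1.2.1 (le_of_lt hs), mul_le_one₀ z.1.2.2 (le_of_lt hs) hs1⟩
  refine ⟨fun z => ⟨_, hmem z⟩, by fun_prop, fun y => by simp, ?_⟩
  filter_upwards [hP] with y hy t ht
  have hts : (t : ℝ) * s ∈ Ioc 0 s := ⟨mul_pos ht hs, mul_le_of_le_one_left (le_of_lt hs) t.2.2⟩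
  exact hPQ hy (hsQ hts).1

theorem exists_isStationaryOn_of_isStrictLocalMinOn (hD : IsCompact D) (hconv : Convex ℝ D)
    (hf : ContDiff ℝ 1 f) (hpq : p ≠ q) (hp : IsStrictLocalMinOn f D p)
    (hq : IsStrictLocalMinOn f D q) (hjoin : JoinedIn (D ∩ f ⁻¹' Iic m) p q) :
    ∃ x ∈ D, max (f p) (f q) ≤ f x ∧ f x ≤ m ∧ IsStationaryOn f D x ∧
      ¬ IsStrictLocalMinOn f D x := by
  have : CompactSpace D := isCompact_iff_compactSpace.1 hD
  have : LocallyPathConnectedSpace D := hconv.locallyPathConnectedSpace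
  lift p to D using hjoin.source_mem.1
  lift q to D using hjoin.target_mem.1
  obtain ⟨γ, hγ⟩ := hjoin
  have hjoin : JoinedIn (D.domRestrict f ⁻¹' Iic m) p q :=
    ⟨⟨⟨fun t => ⟨γ t, (hγ t).1⟩, by fun_prop⟩, Subtype.ext γ.source, Subtype.ext γ.target⟩,
      fun t => (hγ t).2⟩
  obtain ⟨x, hpx, hxm, hmin, hdesc⟩ := exists_mountain_pass_point
    (hf.continuous.comp continuous_subtype_val) (Subtype.coe_ne_coe.1 hpq)
    (isStrictLocalMinOn_domRestrict_iff.2 hp) (isStrictLocalMinOn_domRestrict_iff.2 hq) hjoin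
  refine ⟨x, x.2, hpx, hxm, fun w hw => ?_, isStrictLocalMinOn_domRestrict_iff.not.1 hmin⟩
  by_contra! hneg
  exact hdesc (hasLocalDescent_domRestrict hconv hw
    (hf.contDiffAt.hasStrictFDerivAt one_ne_zero) hneg)

lemma IsStationaryOn.fderiv_eq_zero (hx : IsStationaryOn f D x) (hD : D ∈ 𝓝 x) :
    fderiv ℝ f x = 0 := by
  have hmin : IsLocalMin (fderiv ℝ f x) x := by
    filter_upwards [hD] with w hw
    simpa using hx w hw
  simpa using hmin.fderiv_eq_zero

lemma IsStationaryOn.deriv_comp_eq_zero (hx : IsStationaryOn f D x) {γ : ℝ → E} {t : ℝ}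
    (hγD : ∀ s, γ s ∈ D) (hγ : DifferentiableAt ℝ γ t) (hxt : γ t = x)
    (hf : DifferentiableAt ℝ f x) : deriv (f ∘ γ) t = 0 := by
  subst hxt
  have hmin : IsLocalMin (fderiv ℝ f (γ t) ∘ γ) t :=
    Eventually.of_forall fun s => by simpa using hx (γ s) (hγD s)
  calc deriv (f ∘ γ) t = fderiv ℝ f (γ t) (deriv γ t) := fderiv_comp_deriv t hf hγ
    _ = deriv (fderiv ℝ f (γ t) ∘ γ) t :=
      ((fderiv ℝ f (γ t)).hasFDerivAt.comp_hasDerivAt t hγ.hasDerivAt).deriv.symm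
    _ = 0 := hmin.deriv_eq_zero

end Convex

section UnitBall

open Set Filter Topology Metric

variable {E : Type*} [NormedAddCommGroup E] [NormedSpace ℝ E] {f : E → ℝ} {f' : E →L[ℝ] ℝ} {x : E}

lemma tendsto_inv_norm_smul_sphere (hx : ‖x‖ = 1) :
    Tendsto (fun y => ‖y‖⁻¹ • y) (𝓝 x) (𝓝[sphere 0 1] x) := by
  have hcont : ContinuousAt (fun y : E => ‖y‖⁻¹ • y) x :=
    (continuous_norm.continuousAt.inv₀ (by simp [hx])).smul continuousAt_id
  refine tendsto_nhdsWithin_iff.2 ⟨by simpa [ContinuousAt, hx] using hcont, ?_⟩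
  filter_upwards [eventually_ne_nhds (norm_ne_zero_iff.1 (hx.trans_ne one_ne_zero))] with y hy
  simp [norm_smul, hy]

/-- Moving a point of the ball radially outwards to the sphere decreases `f`. -/
lemma IsStrictLocalMinOn.closedBall_of_sphere (hmin : IsStrictLocalMinOn f (sphere 0 1) x)
    (hx : ‖x‖ = 1) (hf : HasStrictFDerivAt f f' x) (hneg : f' x < 0) :
    IsStrictLocalMinOn f (closedBall 0 1) x := by
  have hproj := tendsto_inv_norm_smul_sphere hx
  have hradial : Tendsto (fun y : E => (y, ‖y‖⁻¹ • y, 1 - ‖y‖)) (𝓝[ball 0 1] x)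
      (𝓝 x ×ˢ 𝓝 x ×ˢ 𝓝[>] 0) := by
    have htime : Tendsto (fun y : E => 1 - ‖y‖) (𝓝[ball 0 1] x) (𝓝[>] 0) := by
      refine tendsto_nhdsWithin_iff.2 ⟨?_, eventually_nhdsWithin_of_forall fun y hy => ?_⟩
      · simpa [hx] using (continuous_norm.tendsto x).const_sub 1 |>.mono_left nhdsWithin_le_nhds
      · simpa using hy
    exact (tendsto_nhds_of_tendsto_nhdsWithin tendsto_id).prodMk
      (((tendsto_nhds_of_tendsto_nhdsWithin hproj).mono_left nhdsWithin_le_nhds).prodMk htime)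
  have hdecr := eventually_nhdsWithin_iff.1
    (hradial.eventually (eventually_add_smul_lt_of_hasStrictFDerivAt hf hneg))
  have hne : ∀ᶠ y in 𝓝 x, y ≠ 0 :=
    eventually_ne_nhds (norm_ne_zero_iff.1 (hx.trans_ne one_ne_zero))
  refine eventually_nhdsWithin_iff.2 ?_
  filter_upwards [hproj.eventually hmin, hdecr, hne] with y hymin hydecr hy0 hy hyx
  rcases (mem_closedBall_zero_iff.1 hy).eq_or_lt with hy1 | hy1
  · rw [hy1, inv_one, one_smul] at hymin
    exact hymin hyx
  have hend : y + (1 - ‖y‖) • ‖y‖⁻¹ • y = ‖y‖⁻¹ • y := by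
    rw [sub_smul, one_smul, smul_inv_smul₀ (norm_ne_zero_iff.2 hy0), add_sub_cancel]
  calc f x ≤ f (‖y‖⁻¹ • y) := by
        rcases eq_or_ne (‖y‖⁻¹ • y) x with h | h
        exacts [h ▸ le_rfl, (hymin h).le]
    _ < f y := by simpa only [hend] using hydecr (mem_ball_zero_iff.2 hy1)

end UnitBall

section Circle

open Set Filter Topology Metric

lemma sphPt_eq_repr_circleExp (t : ℝ) :
    sphPt t = Complex.orthonormalBasisOneI.repr (Circle.exp t) := by
  ext i
  fin_cases i <;>
    simp [sphPt, Circle.coe_exp, Complex.exp_ofReal_mul_I_re, Complex.exp_ofReal_mul_I_im]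

lemma norm_sphPt (t : ℝ) : ‖sphPt t‖ = 1 := by
  simp [sphPt_eq_repr_circleExp]

lemma sphPt_mem_closedBall (t : ℝ) : sphPt t ∈ closedBall (0 : E2) 1 :=
  mem_closedBall_zero_iff.2 (norm_sphPt t).le

lemma periodic_sphPt : Function.Periodic sphPt (2 * Real.pi) := fun t => by
  simp [sphPt]

lemma differentiable_sphPt : Differentiable ℝ sphPt :=
  (EuclideanSpace.equiv (Fin 2) ℝ).symm.differentiable.comp <| differentiable_pi.2 fun i => by
    fin_cases i
    exacts [Real.differentiable_cos, Real.differentiable_sin]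

lemma range_repr_circle :
    range (fun z : Circle => Complex.orthonormalBasisOneI.repr z) = sphere (0 : E2) 1 := by
  have hcircle : range (fun z : Circle => (z : ℂ)) = sphere 0 1 :=
    Subset.antisymm (range_subset_iff.2 fun z => mem_sphere_zero_iff_norm.2 z.norm_coe)
      fun z hz => ⟨⟨z, hz⟩, rfl⟩
  have himage := Complex.orthonormalBasisOneI.repr.image_sphere 0 1
  rwa [map_zero, ← hcircle, ← range_comp] at himage

lemma range_sphPt : range sphPt = sphere (0 : E2) 1 := by
  rw [← range_repr_circle, ← Circle.exp_surjective.range_comp]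
  exact congrArg range (funext sphPt_eq_repr_circleExp)

lemma map_sphPt_nhds (t : ℝ) : map sphPt (𝓝 t) = 𝓝[sphere 0 1] (sphPt t) := by
  have hemb : IsEmbedding fun z : Circle => Complex.orthonormalBasisOneI.repr z :=
    Complex.orthonormalBasisOneI.repr.toHomeomorph.isEmbedding.comp IsEmbedding.subtypeVal
  rw [← range_repr_circle, sphPt_eq_repr_circleExp, ← hemb.map_nhds_eq,
    ← isLocalHomeomorph_circleExp.map_nhds_eq, map_map]
  exact map_congr (Eventually.of_forall sphPt_eq_repr_circleExp)

lemma IsStrictLocalMinOn.of_comp_sphPt {f : E2 → ℝ} {t : ℝ}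
    (ht : IsStrictLocalMinOn (f ∘ sphPt) univ t) : IsStrictLocalMinOn f (sphere 0 1) (sphPt t) := by
  rw [IsStrictLocalMinOn, nhdsWithin_univ] at ht
  rw [IsStrictLocalMinOn, ← map_sphPt_nhds, eventually_map]
  filter_upwards [ht] with s hs hst
  exact hs (ne_of_apply_ne sphPt hst)

end Circle

section Calculus

open Set Filter Topology

variable {g : ℝ → ℝ} {t α β : ℝ}

lemma isStrictLocalMinOn_of_deriv_deriv_pos (hg : Continuous g) (h0 : deriv g t = 0)
    (h2 : 0 < deriv (deriv g) t) : IsStrictLocalMinOn g univ t := by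
  have hmin : IsLocalMin g t := isLocalMin_of_deriv_deriv_pos h2 h0 hg.continuousAt
  have hcrit : ∀ᶠ s in 𝓝[≠] t, deriv g s ≠ 0 := by
    simpa only [h0] using (differentiableAt_of_deriv_ne_zero h2.ne').hasDerivAt.eventually_ne h2.ne'
  rw [IsStrictLocalMinOn, nhdsWithin_univ]
  filter_upwards [hmin, hmin.eventually_nhds, eventually_nhdsWithin_iff.1 hcrit]
    with s hs hs' hscrit hst
  refine lt_of_le_of_ne hs fun heq => hscrit hst (IsLocalMin.deriv_eq_zero ?_)
  simpa only [IsLocalMin, IsMinFilter, ← heq] using hs'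

lemma strictMonoOn_or_strictAntiOn_of_deriv_ne_zero (hg : Differentiable ℝ g)
    (hne : ∀ t ∈ Ioo α β, deriv g t ≠ 0) : StrictMonoOn g (Icc α β) ∨ StrictAntiOn g (Icc α β) := by
  rcases hasDerivWithinAt_forall_lt_or_forall_gt_of_forall_ne (convex_Ioo α β)
    (fun t _ => (hg t).hasDerivAt.hasDerivWithinAt) hne with h | h
  · right
    exact strictAntiOn_of_deriv_neg (convex_Icc α β) hg.continuous.continuousOn
      (by simpa using h)
  · left
    exact strictMonoOn_of_deriv_pos (convex_Icc α β) hg.continuous.continuousOn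
      (by simpa using h)

lemma deriv_deriv_pos_left_of_strictMonoOn (hg : ContinuousAt g α) (hαβ : α < β)
    (hmono : StrictMonoOn g (Icc α β)) (h0 : deriv g α = 0) (h2 : deriv (deriv g) α ≠ 0) :
    0 < deriv (deriv g) α := by
  by_contra! hneg
  have hmax : IsLocalMax g α := isLocalMax_of_deriv_deriv_neg (hneg.lt_of_ne h2) h0 hg
  obtain ⟨s, hs, hsI⟩ := ((hmax.filter_mono nhdsWithin_le_nhds).and (Ioc_mem_nhdsGT hαβ)).exists
  exact (hmono (left_mem_Icc.2 hαβ.le) (Ioc_subset_Icc_self hsI) hsI.1).not_ge hs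

lemma deriv_deriv_pos_right_of_strictAntiOn (hg : ContinuousAt g β) (hαβ : α < β)
    (hanti : StrictAntiOn g (Icc α β)) (h0 : deriv g β = 0) (h2 : deriv (deriv g) β ≠ 0) :
    0 < deriv (deriv g) β := by
  by_contra! hneg
  have hmax : IsLocalMax g β := isLocalMax_of_deriv_deriv_neg (hneg.lt_of_ne h2) h0 hg
  obtain ⟨s, hs, hsI⟩ := ((hmax.filter_mono nhdsWithin_le_nhds).and (Ico_mem_nhdsLT hαβ)).exists
  exact (hanti (Ico_subset_Icc_self hsI) (right_mem_Icc.2 hαβ.le) hsI.2).not_ge hs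

lemma deriv_deriv_neg_left_of_strictAntiOn (hg : ContinuousAt g α) (hαβ : α < β)
    (hanti : StrictAntiOn g (Icc α β)) (h0 : deriv g α = 0) (h2 : deriv (deriv g) α ≠ 0) :
    deriv (deriv g) α < 0 := by
  simpa [deriv.neg'] using deriv_deriv_pos_left_of_strictMonoOn hg.neg hαβ hanti.neg
    (by simpa [deriv.neg'] using h0) (by simpa [deriv.neg'] using h2)

lemma deriv_deriv_neg_right_of_strictMonoOn (hg : ContinuousAt g β) (hαβ : α < β)
    (hmono : StrictMonoOn g (Icc α β)) (h0 : deriv g β = 0) (h2 : deriv (deriv g) β ≠ 0) :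
    deriv (deriv g) β < 0 := by
  simpa [deriv.neg'] using deriv_deriv_pos_right_of_strictAntiOn hg.neg hαβ hmono.neg
    (by simpa [deriv.neg'] using h0) (by simpa [deriv.neg'] using h2)

lemma periodic_deriv {c : ℝ} (hg : Function.Periodic g c) : Function.Periodic (deriv g) c :=
  fun t => by rw [← deriv_comp_add_const, funext hg]

end Calculus

namespace Ribbon

open Set Filter Topology

variable {n : ℕ} (a : Ribbon n) {t : ℝ}

/-- The index of the `k`-th node when the nodes are numbered cyclically by the integers. -/
def nodeIndex (k : ℤ) : Fin n :=
  have hn : (0 : ℤ) < n := mod_cast a.n_pos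
  ⟨(k % n).toNat, by have := Int.emod_nonneg k hn.ne'; have := Int.emod_lt_of_pos k hn; omega⟩

/-- The angle of the `k`-th node, lifted to the universal cover `ℝ` of the circle so that the
angles increase with `k ∈ ℤ`. -/
def nodeAngle (k : ℤ) : ℝ :=
  a.θ (a.nodeIndex k) + (k / n : ℤ) * (2 * Real.pi)

lemma nodeIndex_add_ediv_mul (k : ℤ) : (a.nodeIndex k : ℤ) + k / n * n = k := by
  have hn : (n : ℤ) ≠ 0 := mod_cast a.n_pos.ne'
  simp [nodeIndex, Int.emod_nonneg k hn, Int.emod_add_ediv_mul]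

lemma nodeIndex_add_mul (i : Fin n) (j : ℤ) : a.nodeIndex (i + j * n) = i := by
  ext
  simp [nodeIndex, Int.add_mul_emod_self_right, ← Int.natCast_mod, Nat.mod_eq_of_lt]

lemma nodeAngle_add_mul (i : Fin n) (j : ℤ) :
    a.nodeAngle (i + j * n) = a.θ i + j * (2 * Real.pi) := by
  have hn : (n : ℤ) ≠ 0 := mod_cast a.n_pos.ne'
  rw [nodeAngle, nodeIndex_add_mul, Int.add_mul_ediv_right _ _ hn,
    Int.ediv_eq_zero_of_lt (by positivity) (mod_cast i.2), zero_add]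

lemma nodeIndex_natCast (i : Fin n) : a.nodeIndex (i : ℕ) = i := by
  simpa using a.nodeIndex_add_mul i 0

lemma nodeIndex_add_one (k : ℤ) : a.nodeIndex (k + 1) = a.next (a.nodeIndex k) := by
  ext
  have hn : (0 : ℤ) < n := mod_cast a.n_pos
  zify
  simp [nodeIndex, next, Int.emod_nonneg _ hn.ne']

lemma nodeIndex_add_two_ne (hn : 2 < n) (k : ℤ) : a.nodeIndex k ≠ a.nodeIndex (k + 2) := fun h => by
  have hn0 : (n : ℤ) ≠ 0 := mod_cast a.n_pos.ne'
  have hmod : k % n = (k + 2) % n := by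
    have := congrArg (fun i : Fin n => ((i : ℕ) : ℤ)) h
    simpa [nodeIndex, Int.emod_nonneg _ hn0] using this
  have hle := Int.le_of_dvd two_pos (by simpa using Int.ModEq.dvd hmod)
  omega

lemma comp_nodeAngle {α : Type*} {h : ℝ → α} (hh : Function.Periodic h (2 * Real.pi)) (k : ℤ) :
    h (a.nodeAngle k) = h (a.θ (a.nodeIndex k)) :=
  hh.int_mul (k / n) _

lemma strictMono_nodeAngle : StrictMono a.nodeAngle := by
  refine strictMono_int_of_lt_succ fun k => ?_
  obtain ⟨i, j, rfl⟩ : ∃ (i : Fin n) (j : ℤ), k = i + j * n :=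
    ⟨_, _, (a.nodeIndex_add_ediv_mul k).symm⟩
  rw [nodeAngle_add_mul]
  rcases Nat.lt_or_eq_of_le (Nat.succ_le_of_lt i.2) with hi | hi
  · have hnext := a.nodeAngle_add_mul ⟨i + 1, hi⟩ j
    have hθ : a.θ i < a.θ ⟨i + 1, hi⟩ := a.theta_mono (Fin.lt_def.2 (Nat.lt_succ_self _))
    push_cast at hnext
    rw [add_right_comm, hnext]
    linarith
  · have hnext := a.nodeAngle_add_mul ⟨0, a.n_pos⟩ (j + 1)
    have hwrap : (i : ℤ) + j * n + 1 = (0 : ℕ) + (j + 1) * n := by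
      have hin : ((i : ℕ) : ℤ) + 1 = n := mod_cast hi
      push_cast
      linear_combination hin
    rw [hwrap, hnext]
    push_cast
    linarith [(a.theta_mem i).2, (a.theta_mem ⟨0, a.n_pos⟩).1]

lemma exists_nodeAngle_eq (ht : deriv a.g t = 0) : ∃ k, a.nodeAngle k = t := by
  have hpi := Real.two_pi_pos
  obtain ⟨i, hi⟩ := a.crit_only _ (toIcoMod_mem_Ico' hpi t) (by
    rwa [toIcoMod, (periodic_deriv a.periodic_g).sub_zsmul_eq])
  refine ⟨i + toIcoDiv hpi 0 t * n, ?_⟩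
  rw [nodeAngle_add_mul, ← hi, ← zsmul_eq_mul, toIcoMod_add_toIcoDiv_zsmul]

lemma deriv_nodeAngle (k : ℤ) : deriv a.g (a.nodeAngle k) = 0 := by
  rw [a.comp_nodeAngle (periodic_deriv a.periodic_g), a.node_crit]

lemma deriv_deriv_nodeAngle_ne_zero (k : ℤ) : deriv (deriv a.g) (a.nodeAngle k) ≠ 0 := by
  rw [a.comp_nodeAngle (periodic_deriv (periodic_deriv a.periodic_g))]
  exact a.node_nondeg _

lemma deriv_ne_zero_of_mem_Ioo {k : ℤ} (ht : t ∈ Ioo (a.nodeAngle k) (a.nodeAngle (k + 1))) :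
    deriv a.g t ≠ 0 := fun h0 => by
  obtain ⟨j, rfl⟩ := a.exists_nodeAngle_eq h0
  have h1 := a.strictMono_nodeAngle.lt_iff_lt.1 ht.1
  have h2 := a.strictMono_nodeAngle.lt_iff_lt.1 ht.2
  omega

lemma strictMonoOn_or_strictAntiOn_between_nodes (k : ℤ) :
    (StrictMonoOn a.g (Icc (a.nodeAngle k) (a.nodeAngle (k + 1))) ∧
      0 < deriv (deriv a.g) (a.nodeAngle k) ∧ deriv (deriv a.g) (a.nodeAngle (k + 1)) < 0) ∨
    (StrictAntiOn a.g (Icc (a.nodeAngle k) (a.nodeAngle (k + 1))) ∧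
      deriv (deriv a.g) (a.nodeAngle k) < 0 ∧ 0 < deriv (deriv a.g) (a.nodeAngle (k + 1))) := by
  have hg : Differentiable ℝ a.g := a.smooth_g.differentiable (by simp)
  have hlt : a.nodeAngle k < a.nodeAngle (k + 1) := a.strictMono_nodeAngle (lt_add_one k)
  refine (strictMonoOn_or_strictAntiOn_of_deriv_ne_zero hg
    fun t => a.deriv_ne_zero_of_mem_Ioo).imp (fun hmono => ⟨hmono, ?_, ?_⟩)
    (fun hanti => ⟨hanti, ?_, ?_⟩)
  · exact deriv_deriv_pos_left_of_strictMonoOn (hg _).continuousAt hlt hmono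
      (a.deriv_nodeAngle _) (a.deriv_deriv_nodeAngle_ne_zero _)
  · exact deriv_deriv_neg_right_of_strictMonoOn (hg _).continuousAt hlt hmono
      (a.deriv_nodeAngle _) (a.deriv_deriv_nodeAngle_ne_zero _)
  · exact deriv_deriv_neg_left_of_strictAntiOn (hg _).continuousAt hlt hanti
      (a.deriv_nodeAngle _) (a.deriv_deriv_nodeAngle_ne_zero _)
  · exact deriv_deriv_pos_right_of_strictAntiOn (hg _).continuousAt hlt hanti
      (a.deriv_nodeAngle _) (a.deriv_deriv_nodeAngle_ne_zero _)

lemma clusterNumber_le_encard {A : Set ℝ}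
    (hA : ∀ i, ∃ y ∈ A, y ∈ uIcc (a.g (a.θ i)) (a.g (a.θ (a.next i)))) :
    (clusterNumber a : ℕ∞) ≤ A.encard := by
  rcases A.finite_or_infinite with hfin | hinf
  · rw [hfin.encard_eq_coe_toFinset_card]
    exact mod_cast Nat.sInf_le ⟨hfin.toFinset, rfl, fun i => by simpa using hA i⟩
  · simp [hinf.encard_eq]

end Ribbon

namespace IsExtension

open Set Filter Topology Metric

variable {n : ℕ} {a : Ribbon n} {f : E2 → ℝ} {k : ℤ} {x : E2}

lemma comp_sphPt (hf : IsExtension a f) : f ∘ sphPt = a.g :=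
  funext hf.2.1

lemma hasStrictFDerivAt (hf : IsExtension a f) (x : E2) :
    HasStrictFDerivAt f (fderiv ℝ f x) x :=
  hf.1.contDiffAt.hasStrictFDerivAt (by simp)

lemma fderiv_radial_neg (hf : IsExtension a f) (hpos : ∀ i, a.ν i = 1)
    (hk : 0 < deriv (deriv a.g) (a.nodeAngle k)) :
    fderiv ℝ f (sphPt (a.nodeAngle k)) (sphPt (a.nodeAngle k)) < 0 := by
  rw [a.comp_nodeAngle (periodic_deriv (periodic_deriv a.periodic_g))] at hk
  rw [a.comp_nodeAngle periodic_sphPt, ← inner_gradient_left]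
  simpa [hpos] using (hf.2.2.2 _).2 hk

lemma fderiv_radial_pos (hf : IsExtension a f) (hpos : ∀ i, a.ν i = 1)
    (hk : deriv (deriv a.g) (a.nodeAngle k) < 0) :
    0 < fderiv ℝ f (sphPt (a.nodeAngle k)) (sphPt (a.nodeAngle k)) := by
  rw [a.comp_nodeAngle (periodic_deriv (periodic_deriv a.periodic_g))] at hk
  rw [a.comp_nodeAngle periodic_sphPt, ← inner_gradient_left]
  simpa [hpos] using (hf.2.2.2 _).1 hk

lemma isStrictLocalMinOn_closedBall (hf : IsExtension a f) (hpos : ∀ i, a.ν i = 1)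
    (hk : 0 < deriv (deriv a.g) (a.nodeAngle k)) :
    IsStrictLocalMinOn f (closedBall 0 1) (sphPt (a.nodeAngle k)) := by
  have hcircle : IsStrictLocalMinOn (f ∘ sphPt) univ (a.nodeAngle k) := by
    rw [hf.comp_sphPt]
    exact isStrictLocalMinOn_of_deriv_deriv_pos a.smooth_g.continuous (a.deriv_nodeAngle k) hk
  exact hcircle.of_comp_sphPt.closedBall_of_sphere (norm_sphPt _) (hf.hasStrictFDerivAt _)
    (hf.fderiv_radial_neg hpos hk)

lemma isStrictLocalMinOn_of_isStationaryOn (hf : IsExtension a f) (hpos : ∀ i, a.ν i = 1)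
    (hx : IsStationaryOn f (closedBall 0 1) x) (hx1 : ‖x‖ = 1) :
    IsStrictLocalMinOn f (closedBall 0 1) x := by
  obtain ⟨t, rfl⟩ : x ∈ range sphPt := range_sphPt ▸ mem_sphere_zero_iff_norm.2 hx1
  have htangent : deriv a.g t = 0 := by
    rw [← hf.comp_sphPt]
    exact hx.deriv_comp_eq_zero sphPt_mem_closedBall (differentiable_sphPt t) rfl
      (hf.hasStrictFDerivAt _).differentiableAt
  obtain ⟨k, rfl⟩ := a.exists_nodeAngle_eq htangent
  have hradial : fderiv ℝ f (sphPt (a.nodeAngle k)) (sphPt (a.nodeAngle k)) ≤ 0 := by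
    simpa using hx 0 (mem_closedBall_self zero_le_one)
  refine hf.isStrictLocalMinOn_closedBall hpos
    ((a.deriv_deriv_nodeAngle_ne_zero k).lt_or_gt.resolve_left fun hk => ?_)
  exact (hf.fderiv_radial_pos hpos hk).not_ge hradial

lemma joinedIn_sphPt (hf : IsExtension a f) {α β m : ℝ} (hαβ : α ≤ β)
    (hm : ∀ t ∈ Icc α β, a.g t ≤ m) :
    JoinedIn (closedBall 0 1 ∩ f ⁻¹' Iic m) (sphPt α) (sphPt β) := by
  have hIcc : JoinedIn (Icc α β) α β := .of_segment_subset (segment_eq_Icc hαβ).le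
  refine (hIcc.map differentiable_sphPt.continuous).mono (image_subset_iff.2 fun t ht => ?_)
  exact ⟨sphPt_mem_closedBall t, (hf.2.1 t).trans_le (hm t ht)⟩

/-- The arc through a node of maximum type joins two strict local minima. -/
lemma exists_mem_critPts_of_deriv_deriv_neg (hf : IsExtension a f) (hn : 2 < n)
    (hpos : ∀ i, a.ν i = 1) (hk : deriv (deriv a.g) (a.nodeAngle (k + 1)) < 0) :
    ∃ x ∈ critPts f, max (a.g (a.nodeAngle k)) (a.g (a.nodeAngle (k + 2))) ≤ f x ∧
      f x ≤ a.g (a.nodeAngle (k + 1)) := by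
  obtain ⟨hmono, hmin, -⟩ :=
    (a.strictMonoOn_or_strictAntiOn_between_nodes k).resolve_right fun h => hk.not_gt h.2.2
  obtain ⟨hanti, -, hmin'⟩ :=
    (a.strictMonoOn_or_strictAntiOn_between_nodes (k + 1)).resolve_left fun h => hk.not_gt h.2.1
  have hle : a.nodeAngle k ≤ a.nodeAngle (k + 1) := a.strictMono_nodeAngle.monotone (by omega)
  have hle' : a.nodeAngle (k + 1) ≤ a.nodeAngle (k + 1 + 1) :=
    a.strictMono_nodeAngle.monotone (by omega)
  rw [add_assoc, one_add_one_eq_two] at hanti hmin' hle'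
  have hne : sphPt (a.nodeAngle k) ≠ sphPt (a.nodeAngle (k + 2)) := fun h => by
    have hval : a.g (a.nodeAngle k) = a.g (a.nodeAngle (k + 2)) := by
      rw [← hf.2.1, ← hf.2.1, h]
    rw [a.comp_nodeAngle a.periodic_g, a.comp_nodeAngle a.periodic_g] at hval
    exact a.nodeIndex_add_two_ne hn k (a.values_distinct _ _ hval)
  have hjoin :=
    (hf.joinedIn_sphPt hle fun t ht => hmono.monotoneOn ht (right_mem_Icc.2 hle) ht.2).trans
      (hf.joinedIn_sphPt hle' fun t ht => hanti.antitoneOn (left_mem_Icc.2 hle') ht ht.1)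
  obtain ⟨x, hxD, hlow, hhigh, hstat, hxmin⟩ := exists_isStationaryOn_of_isStrictLocalMinOn
    (isCompact_closedBall 0 1) (convex_closedBall 0 1) (hf.1.of_le (by simp)) hne
    (hf.isStrictLocalMinOn_closedBall hpos hmin) (hf.isStrictLocalMinOn_closedBall hpos hmin') hjoin
  rw [hf.2.1, hf.2.1] at hlow
  have hball : x ∈ ball (0 : E2) 1 := mem_ball_zero_iff.2 <|
    (mem_closedBall_zero_iff.1 hxD).lt_of_ne fun hx1 =>
      hxmin (hf.isStrictLocalMinOn_of_isStationaryOn hpos hstat hx1)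
  exact ⟨x, ⟨hball, hstat.fderiv_eq_zero (closedBall_mem_nhds_of_mem hball)⟩, hlow, hhigh⟩

lemma exists_mem_critPts_mem_uIcc (hf : IsExtension a f) (hn : 2 < n) (hpos : ∀ i, a.ν i = 1)
    (i : Fin n) : ∃ x ∈ critPts f, f x ∈ uIcc (a.g (a.θ i)) (a.g (a.θ (a.next i))) := by
  have hi := a.comp_nodeAngle a.periodic_g (i : ℕ)
  have hnext := a.comp_nodeAngle a.periodic_g ((i : ℕ) + 1)
  rw [a.nodeIndex_natCast] at hi
  rw [a.nodeIndex_add_one, a.nodeIndex_natCast] at hnext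
  rw [← hi, ← hnext]
  rcases a.strictMonoOn_or_strictAntiOn_between_nodes (i : ℕ) with ⟨-, -, hmax⟩ | ⟨-, hmax, -⟩
  · obtain ⟨x, hx, hlow, hhigh⟩ := hf.exists_mem_critPts_of_deriv_deriv_neg hn hpos hmax
    exact ⟨x, hx, mem_uIcc_of_le ((le_max_left _ _).trans hlow) hhigh⟩
  · obtain ⟨x, hx, hlow, hhigh⟩ :=
      hf.exists_mem_critPts_of_deriv_deriv_neg (k := (i : ℕ) - 1) hn hpos (by rwa [sub_add_cancel])
    rw [sub_add_cancel] at hhigh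
    rw [show ((i : ℕ) : ℤ) - 1 + 2 = (i : ℕ) + 1 by ring] at hlow
    exact ⟨x, hx, mem_uIcc_of_ge ((le_max_right _ _).trans hlow) hhigh⟩

end IsExtension

/-- If `a` is a ribbon with `n ≥ 4` nodes all of which are positive, then every extension of
`a` has at least `δ(a)` critical points in the open unit disk; that is, `γ(a) ≥ δ(a)`. -/
theorem stmt_5 (n : ℕ) (hn : 4 ≤ n) (a : Ribbon n) (hpos : ∀ i, a.ν i = 1) :
    (∀ f : E2 → ℝ, IsExtension a f →
      ((clusterNumber a : ℕ) : ℕ∞) ≤ (critPts f).encard) ∧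
    ((clusterNumber a : ℕ∞) ≤ gammaR a) := by
  have hbound : ∀ f : E2 → ℝ, IsExtension a f → (clusterNumber a : ℕ∞) ≤ (critPts f).encard := by
    intro f hf
    refine (a.clusterNumber_le_encard fun i => ?_).trans (Set.encard_image_le f (critPts f))
    obtain ⟨x, hx, hfx⟩ := hf.exists_mem_critPts_mem_uIcc (by omega) hpos i
    exact ⟨f x, Set.mem_image_of_mem f hx, hfx⟩
  refine ⟨hbound, le_sInf ?_⟩
  rintro _ ⟨f, hf, rfl⟩
  exact hbound f hf
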